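/- arXiv:0708.2138 — 2 statements merged into one kernel-verified Lean document; each statement's English description precedes it below -/
import Mathlib

section
/- Let ω = Σ_{i=1}^l m_i α_i be a minuscule weight whose coefficients m_i are nonnegative rationals, I = {α ∈ S : ⟨ω, α∨⟩ = 0} and W^I = {w ∈ W : w(α) > 0 for all α ∈ I}, and let τ be the unique element of W^I with τ(ω) = Σ_{i=1}^l (m_i − ⌊m_i⌋) α_i (⌊·⌋ the floor). If σ ∈ W^I satisfies σ(nω) ≥ 0 for some positive integer n, then σ ≤ τ, i.e., ℓ(τ) = ℓ(σ) + ℓ(τσ^{−1}). -/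
open scoped RealInnerProductSpace

/-- A finite reduced crystallographic root system `Φ` spanning a real inner product
space `V`, together with a fixed base of simple roots `α 0, …, α (l-1)`: every root is
a nonnegative or nonpositive integral combination of the simple roots.  The simple
reflections `s i` are given by the usual formula `s_α(λ) = λ − ⟨λ, α∨⟩ α`. -/
structure RootSystemWithBase (V : Type*) [NormedAddCommGroup V] [InnerProductSpace ℝ V] where
  l : ℕ
  Φ : Finset V
  α : Fin l → V
  s : Fin l → V ≃ₗ[ℝ] V
  α_mem : ∀ i, α i ∈ Φ
  root_ne_zero : ∀ β ∈ Φ, β ≠ (0 : V)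
  root_span : Submodule.span ℝ (Φ : Set V) = ⊤
  simple_indep : LinearIndependent ℝ α
  crystallographic : ∀ β ∈ Φ, ∀ γ ∈ Φ, ∃ z : ℤ, 2 * ⟪β, γ⟫ / ⟪γ, γ⟫ = (z : ℝ)
  reduced : ∀ β ∈ Φ, ∀ c : ℝ, c • β ∈ Φ → c = 1 ∨ c = -1
  base : ∀ β ∈ Φ,
    (∃ c : Fin l → ℤ, (∀ i, 0 ≤ c i) ∧ β = ∑ i, (c i : ℝ) • α i) ∨
    (∃ c : Fin l → ℤ, (∀ i, 0 ≤ c i) ∧ β = -(∑ i, (c i : ℝ) • α i))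
  s_apply : ∀ i v, s i v = v - (2 * ⟪v, α i⟫ / ⟪α i, α i⟫) • α i
  s_root : ∀ β ∈ Φ, ∀ i, s i β ∈ Φ

namespace RootSystemWithBase

variable {V : Type*} [NormedAddCommGroup V] [InnerProductSpace ℝ V]

/-- The pairing `⟨λ, β∨⟩ = 2(λ,β)/(β,β)`. -/
noncomputable def pairing (_D : RootSystemWithBase V) (lam β : V) : ℝ :=
  2 * ⟪lam, β⟫ / ⟪β, β⟫

/-- The Weyl group: the subgroup of `GL(V)` generated by the simple reflections. -/
def W (D : RootSystemWithBase V) : Subgroup (V ≃ₗ[ℝ] V) := Subgroup.closure (Set.range D.s)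

/-- The product `s_{i₁} · s_{i₂} ⋯ s_{i_k}` of simple reflections along a word. -/
def wordProd (D : RootSystemWithBase V) (L : List (Fin D.l)) : V ≃ₗ[ℝ] V := (L.map D.s).prod

/-- The length `ℓ(w)`: the least `k` such that `w` is a product of `k` simple
reflections. -/
noncomputable def len (D : RootSystemWithBase V) (w : V ≃ₗ[ℝ] V) : ℕ :=
  sInf {k | ∃ L : List (Fin D.l), L.length = k ∧ D.wordProd L = w}

/-- `v` is a linear combination of the simple roots with all coefficients `≥ 0`. -/
def IsNonnegComb (D : RootSystemWithBase V) (v : V) : Prop :=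
  ∃ c : Fin D.l → ℝ, (∀ i, 0 ≤ c i) ∧ v = ∑ i, c i • D.α i

/-- `v > 0`: a nonzero nonnegative combination of the simple roots. -/
def IsPos (D : RootSystemWithBase V) (v : V) : Prop := D.IsNonnegComb v ∧ v ≠ 0

/-- `x ≤ y` for vectors: `y − x` is a nonnegative combination of the simple roots. -/
def vle (D : RootSystemWithBase V) (x y : V) : Prop := D.IsNonnegComb (y - x)

/-- `λ` is dominant: `⟨λ, αᵢ∨⟩ ≥ 0` for all `i`. -/
def IsDominant (D : RootSystemWithBase V) (lam : V) : Prop :=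
  ∀ i, 0 ≤ D.pairing lam (D.α i)

/-- `ω` is minuscule: dominant with `⟨ω, β∨⟩ ∈ {−1, 0, 1}` for every root `β`. -/
def IsMinuscule (D : RootSystemWithBase V) (ω : V) : Prop :=
  D.IsDominant ω ∧ ∀ β ∈ D.Φ, D.pairing ω β = -1 ∨ D.pairing ω β = 0 ∨ D.pairing ω β = 1

/-- `W^I = {w ∈ W : w(α) > 0 for all α ∈ I}` where `I = {α ∈ S : ⟨ω, α∨⟩ = 0}`. -/
def WI (D : RootSystemWithBase V) (ω : V) : Set (V ≃ₗ[ℝ] V) :=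
  {w | w ∈ D.W ∧ ∀ i, D.pairing ω (D.α i) = 0 → D.IsPos (w (D.α i))}

/-- `w ≤ τ` in `W`:  `ℓ(τ) = ℓ(w) + ℓ(τ w⁻¹)`. -/
def wle (D : RootSystemWithBase V) (w τ : V ≃ₗ[ℝ] V) : Prop :=
  D.len τ = D.len w + D.len (τ * w⁻¹)

end RootSystemWithBase

/-!
For `x, y ∈ W^I` with `y ω ≤ x ω`, the length of `y x⁻¹` equals the height of `x ω - y ω`. Since `ω`
is minuscule, a simple reflection moves a point of the orbit `W ω` by `0` or `±αᵢ`, so at least that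
many reflections are needed. Conversely, if `x ω ≠ y ω` then `x ω - y ω` has positive inner product
with some `αᵢ` of its support; this forces `⟨x ω, αᵢ∨⟩ = 1` or `⟨y ω, αᵢ∨⟩ = -1`, and replacing `x`
respectively `y` by its product with `sᵢ` stays in `W^I` and brings the two points one step closer.

As height is additive, `y ω ≤ x ω` implies `x ≤ y`. Finally, the coefficients of `σ ω - τ ω` are
integers, and they exceed `-1` because those of `σ ω` are nonnegative and those of `τ ω` are less
than `1`; hence `τ ω ≤ σ ω`.
-/

namespace RootSystemWithBase

variable {V : Type*} [NormedAddCommGroup V] [InnerProductSpace ℝ V] (D : RootSystemWithBase V)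

/-! ### Coordinates in the simple roots -/

theorem span_range_α : Submodule.span ℝ (Set.range D.α) = ⊤ := by
  have sum_mem (c : Fin D.l → ℤ) :
      ∑ i, (c i : ℝ) • D.α i ∈ Submodule.span ℝ (Set.range D.α) :=
    Submodule.sum_smul_mem _ _ fun i _ => Submodule.subset_span ⟨i, rfl⟩
  rw [eq_top_iff, ← D.root_span, Submodule.span_le]
  intro β hβ
  rcases D.base β hβ with ⟨c, -, rfl⟩ | ⟨c, -, rfl⟩
  · exact sum_mem c
  · exact Submodule.neg_mem _ (sum_mem c)

/-- The simple roots as a basis of `V`, giving access to the coefficients of a vector. -/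
noncomputable def simpleBasis : Module.Basis (Fin D.l) ℝ V :=
  .mk D.simple_indep D.span_range_α.ge

@[simp]
theorem coe_simpleBasis : ⇑D.simpleBasis = D.α :=
  Module.Basis.coe_mk _ _

theorem sum_simpleBasis_repr (v : V) : ∑ i, D.simpleBasis.repr v i • D.α i = v := by
  simpa only [coe_simpleBasis] using D.simpleBasis.sum_repr v

theorem simpleBasis_repr_sum (c : Fin D.l → ℝ) (i : Fin D.l) :
    D.simpleBasis.repr (∑ j, c j • D.α j) i = c i := by
  simpa only [coe_simpleBasis] using congrFun (D.simpleBasis.repr_sum_self c) i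

@[simp]
theorem simpleBasis_repr_α (i : Fin D.l) : D.simpleBasis.repr (D.α i) = Finsupp.single i 1 := by
  simpa only [coe_simpleBasis] using D.simpleBasis.repr_self i

/-- The height of a vector: the sum of its coefficients in the simple roots. It computes lengths in
`W^I`. -/
noncomputable def height : V →ₗ[ℝ] ℝ :=
  D.simpleBasis.sumCoords

@[simp]
theorem height_α (i : Fin D.l) : D.height (D.α i) = 1 := by
  simpa only [coe_simpleBasis] using! D.simpleBasis.sumCoords_self_apply i

theorem height_eq_sum (v : V) : D.height v = ∑ i, D.simpleBasis.repr v i := by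
  rw [height, Module.Basis.coe_sumCoords_of_fintype]
  simp only [LinearMap.sum_apply, Module.Basis.coord_apply]

/-- The root lattice: the integral linear combinations of the simple roots. Differences of points in
the orbit of a weight lie in it. -/
def rootLattice : Submodule ℤ V :=
  Submodule.span ℤ (Set.range D.α)

variable {D}

theorem mem_rootLattice_iff {v : V} :
    v ∈ D.rootLattice ↔ ∀ i, ∃ z : ℤ, (z : ℝ) = D.simpleBasis.repr v i := by
  simpa [rootLattice] using D.simpleBasis.mem_span_iff_repr_mem ℤ v

theorem mem_rootLattice_of_mem_Φ {β : V} (hβ : β ∈ D.Φ) : β ∈ D.rootLattice := by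
  rw [mem_rootLattice_iff]
  rcases D.base β hβ with ⟨c, -, rfl⟩ | ⟨c, -, rfl⟩
  · exact fun i => ⟨c i, by rw [simpleBasis_repr_sum]⟩
  · exact fun i => ⟨-c i, by rw [map_neg, Finsupp.neg_apply, simpleBasis_repr_sum, Int.cast_neg]⟩

theorem isNonnegComb_iff_repr_nonneg {v : V} :
    D.IsNonnegComb v ↔ ∀ i, 0 ≤ D.simpleBasis.repr v i := by
  constructor
  · rintro ⟨c, hc, rfl⟩ i
    simpa only [simpleBasis_repr_sum] using hc i
  · exact fun h => ⟨D.simpleBasis.repr v, h, (D.sum_simpleBasis_repr v).symm⟩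

theorem isNonnegComb_zero : D.IsNonnegComb 0 :=
  isNonnegComb_iff_repr_nonneg.2 (by simp)

theorem IsNonnegComb.add {u v : V} (hu : D.IsNonnegComb u) (hv : D.IsNonnegComb v) :
    D.IsNonnegComb (u + v) := by
  rw [isNonnegComb_iff_repr_nonneg] at *
  exact fun i => by simpa using add_nonneg (hu i) (hv i)

theorem IsNonnegComb.smul {v : V} (hv : D.IsNonnegComb v) {c : ℝ} (hc : 0 ≤ c) :
    D.IsNonnegComb (c • v) := by
  rw [isNonnegComb_iff_repr_nonneg] at *
  exact fun i => by simpa using mul_nonneg hc (hv i)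

theorem isNonnegComb_smul_iff {v : V} {c : ℝ} (hc : 0 < c) :
    D.IsNonnegComb (c • v) ↔ D.IsNonnegComb v :=
  ⟨fun h => inv_smul_smul₀ hc.ne' v ▸ h.smul (inv_nonneg.2 hc.le), fun h => h.smul hc.le⟩

theorem vle_zero_map_smul_iff (w : V ≃ₗ[ℝ] V) (v : V) {c : ℝ} (hc : 0 < c) :
    D.vle 0 (w (c • v)) ↔ D.IsNonnegComb (w v) := by
  rw [vle, sub_zero, map_smul, isNonnegComb_smul_iff hc]

theorem IsNonnegComb.eq_zero_of_height_eq_zero {v : V} (hv : D.IsNonnegComb v)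
    (h : D.height v = 0) : v = 0 := by
  rw [isNonnegComb_iff_repr_nonneg] at hv
  rw [height_eq_sum, Finset.sum_eq_zero_iff_of_nonneg fun i _ => hv i] at h
  exact D.simpleBasis.ext_elem fun i => by simpa using h i (Finset.mem_univ i)

theorem IsNonnegComb.exists_height_eq_natCast {v : V} (hv : D.IsNonnegComb v)
    (hv' : v ∈ D.rootLattice) : ∃ N : ℕ, D.height v = N := by
  choose z hz using mem_rootLattice_iff.1 hv'
  have hz_nonneg : 0 ≤ ∑ i, z i := Finset.sum_nonneg fun i _ => by
    exact_mod_cast hz i ▸ isNonnegComb_iff_repr_nonneg.1 hv i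
  obtain ⟨N, hN⟩ := Int.eq_ofNat_of_zero_le hz_nonneg
  exact ⟨N, by simp only [height_eq_sum, ← hz]; exact_mod_cast hN⟩

theorem IsNonnegComb.eq_zero_of_neg {v : V} (hv : D.IsNonnegComb v)
    (hv' : D.IsNonnegComb (-v)) : v = 0 := by
  rw [isNonnegComb_iff_repr_nonneg] at hv hv'
  exact D.simpleBasis.ext_elem fun i => by
    simpa using le_antisymm (by simpa using hv' i) (hv i)

theorem IsPos.not_isNonnegComb_neg {v : V} (hv : D.IsPos v) : ¬ D.IsNonnegComb (-v) :=
  fun h => hv.2 (hv.1.eq_zero_of_neg h)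

theorem isPos_α (i : Fin D.l) : D.IsPos (D.α i) := by
  refine ⟨isNonnegComb_iff_repr_nonneg.2 fun j => ?_, D.root_ne_zero _ (D.α_mem i)⟩
  simpa using (Finsupp.single_nonneg.2 zero_le_one : (0 : Fin D.l →₀ ℝ) ≤ .single i 1) j

theorem isPos_or_isPos_neg {β : V} (hβ : β ∈ D.Φ) : D.IsPos β ∨ D.IsPos (-β) := by
  have hβ₀ := D.root_ne_zero β hβ
  rcases D.base β hβ with ⟨c, hc, h⟩ | ⟨c, hc, h⟩
  · exact .inl ⟨⟨_, fun i => Int.cast_nonneg (hc i), h⟩, hβ₀⟩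
  · exact .inr ⟨⟨_, fun i => Int.cast_nonneg (hc i), neg_eq_iff_eq_neg.2 h⟩, neg_ne_zero.2 hβ₀⟩

variable (D) in
theorem inner_eq_sum_repr_mul (u v : V) :
    ⟪u, v⟫ = ∑ i, D.simpleBasis.repr v i * ⟪u, D.α i⟫ := by
  conv_lhs => rw [← D.sum_simpleBasis_repr v]
  simp only [inner_sum, real_inner_smul_right]

theorem IsNonnegComb.exists_repr_pos_and_inner_pos {v : V} (hv : D.IsNonnegComb v)
    (hv₀ : v ≠ 0) : ∃ i, 0 < D.simpleBasis.repr v i ∧ 0 < ⟪v, D.α i⟫ := by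
  have hsum : ∑ _i : Fin D.l, (0 : ℝ) < ∑ i, D.simpleBasis.repr v i * ⟪v, D.α i⟫ := by
    rw [← D.inner_eq_sum_repr_mul, Finset.sum_const_zero]
    exact real_inner_self_pos.2 hv₀
  obtain ⟨i, -, hi⟩ := Finset.exists_lt_of_sum_lt hsum
  have hvi := isNonnegComb_iff_repr_nonneg.1 hv i
  exact ⟨i, (mul_pos_iff.1 hi).resolve_right fun h => h.1.not_ge hvi⟩

/-! ### Simple reflections and the Weyl group -/

variable (D) in
theorem s_eq_sub_pairing_smul (i : Fin D.l) (v : V) :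
    D.s i v = v - D.pairing v (D.α i) • D.α i :=
  D.s_apply i v

variable (D) in
theorem s_eq_reflection (i : Fin D.l) (v : V) :
    D.s i v = (ℝ ∙ D.α i)ᗮ.reflection v := by
  rw [D.s_apply, Submodule.reflection_orthogonal_apply, Submodule.reflection_singleton_apply,
    neg_sub, real_inner_self_eq_norm_sq, real_inner_comm, mul_div_assoc, mul_smul,
    ofNat_smul_eq_nsmul]
  rfl

@[simp]
theorem s_α (i : Fin D.l) : D.s i (D.α i) = -D.α i := by
  rw [s_eq_reflection, Submodule.reflection_orthogonalComplement_singleton_eq_neg]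

@[simp]
theorem s_mul_s (i : Fin D.l) : D.s i * D.s i = 1 := by
  ext v
  simp [s_eq_reflection]

@[simp]
theorem s_inv (i : Fin D.l) : (D.s i)⁻¹ = D.s i :=
  inv_eq_of_mul_eq_one_left (s_mul_s i)

theorem s_mem_W (i : Fin D.l) : D.s i ∈ D.W :=
  Subgroup.subset_closure ⟨i, rfl⟩

theorem W_induction_left {p : (w : V ≃ₗ[ℝ] V) → w ∈ D.W → Prop} (one : p 1 (one_mem _))
    (s_mul : ∀ i w (hw : w ∈ D.W), p w hw → p (D.s i * w) (mul_mem (s_mem_W i) hw))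
    {w : V ≃ₗ[ℝ] V} (hw : w ∈ D.W) : p w hw := by
  induction hw using Subgroup.closure_induction_left with
  | one => exact one
  | mul_left _ hs w hw ih =>
    obtain ⟨i, rfl⟩ := hs
    exact s_mul i w hw ih
  | inv_mul_cancel _ hs w hw ih =>
    obtain ⟨i, rfl⟩ := hs
    simpa only [s_inv] using s_mul i w hw ih

theorem inner_map_map_of_mem_W {w : V ≃ₗ[ℝ] V} (hw : w ∈ D.W) (u v : V) :
    ⟪w u, w v⟫ = ⟪u, v⟫ := by
  induction hw using W_induction_left with
  | one => rfl
  | s_mul i w _ ih => simpa [s_eq_reflection] using ih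

theorem map_mem_Φ_of_mem_W {w : V ≃ₗ[ℝ] V} (hw : w ∈ D.W) {β : V} (hβ : β ∈ D.Φ) :
    w β ∈ D.Φ := by
  induction hw using W_induction_left with
  | one => exact hβ
  | s_mul i w _ ih => exact D.s_root _ ih i

theorem pairing_map_map_of_mem_W {w : V ≃ₗ[ℝ] V} (hw : w ∈ D.W) (u v : V) :
    D.pairing (w u) (w v) = D.pairing u v := by
  simp only [pairing, inner_map_map_of_mem_W hw]

theorem exists_pairing_map_eq_of_mem_W {w : V ≃ₗ[ℝ] V} (hw : w ∈ D.W) (v : V) {β : V}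
    (hβ : β ∈ D.Φ) : ∃ γ ∈ D.Φ, D.pairing (w v) β = D.pairing v γ := by
  refine ⟨w⁻¹ β, map_mem_Φ_of_mem_W (inv_mem hw) hβ, ?_⟩
  rw [← pairing_map_map_of_mem_W hw v, ← LinearEquiv.mul_apply w, mul_inv_cancel,
    LinearEquiv.coe_one, id]

theorem IsPos.s {β : V} (hpos : D.IsPos β) (hβ : β ∈ D.Φ) {i : Fin D.l} (hne : β ≠ D.α i) :
    D.IsPos (D.s i β) := by
  refine (isPos_or_isPos_neg (D.s_root β hβ i)).resolve_right fun hneg => ?_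
  have hβ_nonneg := isNonnegComb_iff_repr_nonneg.1 hpos.1
  have hrepr (j : Fin D.l) (hj : j ≠ i) : D.simpleBasis.repr β j = 0 := by
    have hj_nonpos : D.simpleBasis.repr β j ≤ 0 := by
      simpa [s_eq_sub_pairing_smul, Finsupp.single_eq_of_ne hj] using
        isNonnegComb_iff_repr_nonneg.1 hneg.1 j
    exact le_antisymm hj_nonpos (hβ_nonneg j)
  have hβ_eq : D.simpleBasis.repr β i • D.α i = β := by
    conv_rhs => rw [← D.sum_simpleBasis_repr β]
    rw [Fintype.sum_eq_single i fun j hj => by rw [hrepr j hj, zero_smul]]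
  rcases D.reduced _ (D.α_mem i) _ (hβ_eq.symm ▸ hβ) with h | h
  · exact hne (by rw [← hβ_eq, h, one_smul])
  · linarith [hβ_nonneg i]

theorem s_mul_eq_mul_s {w : V ≃ₗ[ℝ] V} (hw : w ∈ D.W) {i k : Fin D.l}
    (h : w (D.α i) = D.α k) : D.s k * w = w * D.s i := by
  ext v
  simp only [LinearEquiv.mul_apply, s_eq_sub_pairing_smul, map_sub, map_smul, ← h,
    pairing_map_map_of_mem_W hw]

/-! ### Words and length -/

@[simp]
theorem wordProd_nil : D.wordProd [] = 1 := rfl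

@[simp]
theorem wordProd_cons (i : Fin D.l) (L : List (Fin D.l)) :
    D.wordProd (i :: L) = D.s i * D.wordProd L :=
  List.prod_cons

@[simp]
theorem wordProd_append (L L' : List (Fin D.l)) :
    D.wordProd (L ++ L') = D.wordProd L * D.wordProd L' := by
  simp [wordProd]

theorem wordProd_mem_W (L : List (Fin D.l)) : D.wordProd L ∈ D.W :=
  list_prod_mem (by simpa using fun i _ => s_mem_W i)

theorem exists_wordProd_eq {w : V ≃ₗ[ℝ] V} (hw : w ∈ D.W) : ∃ L, D.wordProd L = w := by
  induction hw using W_induction_left with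
  | one => exact ⟨[], rfl⟩
  | s_mul i w _ ih =>
    obtain ⟨L, rfl⟩ := ih
    exact ⟨i :: L, wordProd_cons i L⟩

theorem exists_wordProd_eq_mul_s_of_not_isPos {L : List (Fin D.l)} {i : Fin D.l}
    (h : ¬ D.IsPos (D.wordProd L (D.α i))) :
    ∃ L', L'.length + 1 = L.length ∧ D.wordProd L' = D.wordProd L * D.s i := by
  induction L with
  | nil => exact absurd (isPos_α i) h
  | cons k L ih =>
    by_cases hL : D.IsPos (D.wordProd L (D.α i))
    · have hk : D.wordProd L (D.α i) = D.α k := by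
        by_contra hne
        exact h (hL.s (map_mem_Φ_of_mem_W (wordProd_mem_W L) (D.α_mem i)) hne)
      refine ⟨L, rfl, ?_⟩
      rw [wordProd_cons, s_mul_eq_mul_s (wordProd_mem_W L) hk, mul_assoc, s_mul_s, mul_one]
    · obtain ⟨L', hlen, hL'⟩ := ih hL
      exact ⟨k :: L', by simp [hlen], by simp [hL', mul_assoc]⟩

-- By the exchange property, a reduced word passes only through steps with `w αᵢ > 0`.
theorem W_induction_mul_s {p : (w : V ≃ₗ[ℝ] V) → w ∈ D.W → Prop} (one : p 1 (one_mem _))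
    (mul_s : ∀ w i (hw : w ∈ D.W), D.IsPos (w (D.α i)) → p w hw →
      p (w * D.s i) (mul_mem hw (s_mem_W i)))
    {w : V ≃ₗ[ℝ] V} (hw : w ∈ D.W) : p w hw := by
  obtain ⟨L, rfl⟩ := exists_wordProd_eq hw
  induction hn : L.length using Nat.strong_induction_on generalizing L with
  | _ n ih =>
    rcases List.eq_nil_or_concat' L with rfl | ⟨L, i, rfl⟩
    · exact one
    have hlen : L.length + 1 = n := by simpa using hn
    simp only [wordProd_append, wordProd_cons, wordProd_nil, mul_one]
    by_cases hpos : D.IsPos (D.wordProd L (D.α i))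
    · exact mul_s _ i (wordProd_mem_W L) hpos (ih _ (by lia) L _ rfl)
    · obtain ⟨L', hlen', hL'⟩ := exists_wordProd_eq_mul_s_of_not_isPos hpos
      simpa only [hL'] using ih _ (by lia) L' (wordProd_mem_W L') rfl

theorem eq_one_of_forall_isPos {w : V ≃ₗ[ℝ] V} (hw : w ∈ D.W)
    (h : ∀ i, D.IsPos (w (D.α i))) : w = 1 := by
  induction hw using W_induction_mul_s with
  | one => rfl
  | mul_s w i _ hpos _ =>
    have hneg : D.IsPos (-w (D.α i)) := by simpa using h i
    exact absurd hneg.1 hpos.not_isNonnegComb_neg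

theorem len_wordProd_le (L : List (Fin D.l)) : D.len (D.wordProd L) ≤ L.length :=
  Nat.sInf_le ⟨L, rfl, rfl⟩

theorem exists_length_eq_len {w : V ≃ₗ[ℝ] V} (hw : w ∈ D.W) :
    ∃ L : List (Fin D.l), L.length = D.len w ∧ D.wordProd L = w := by
  obtain ⟨L, hL⟩ := exists_wordProd_eq hw
  exact Nat.sInf_mem (s := {k | ∃ L : List (Fin D.l), L.length = k ∧ D.wordProd L = w})
    ⟨_, L, rfl, hL⟩

theorem len_one : D.len 1 = 0 :=
  Nat.le_zero.1 (len_wordProd_le [])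

theorem len_s_mul_le {w : V ≃ₗ[ℝ] V} (hw : w ∈ D.W) (i : Fin D.l) :
    D.len (D.s i * w) ≤ D.len w + 1 := by
  obtain ⟨L, hlen, rfl⟩ := exists_length_eq_len hw
  simpa [hlen] using len_wordProd_le (i :: L)

theorem len_mul_s_le {w : V ≃ₗ[ℝ] V} (hw : w ∈ D.W) (i : Fin D.l) :
    D.len (w * D.s i) ≤ D.len w + 1 := by
  obtain ⟨L, hlen, rfl⟩ := exists_length_eq_len hw
  simpa [hlen] using len_wordProd_le (L ++ [i])

theorem height_sub_map_le_len {v : V} (hv : ∀ β ∈ D.Φ, D.pairing v β ≤ 1) {w : V ≃ₗ[ℝ] V}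
    (hw : w ∈ D.W) : D.height (v - w v) ≤ D.len w := by
  obtain ⟨L, hlen, rfl⟩ := exists_length_eq_len hw
  rw [← hlen]
  clear hlen hw
  induction L with
  | nil => simp
  | cons i L ih =>
    obtain ⟨γ, hγ, hpair⟩ := exists_pairing_map_eq_of_mem_W (wordProd_mem_W L) v (D.α_mem i)
    have hstep : v - D.wordProd (i :: L) v = (v - D.wordProd L v) + D.pairing v γ • D.α i := by
      rw [wordProd_cons, LinearEquiv.mul_apply, s_eq_sub_pairing_smul, hpair, sub_sub_eq_add_sub,
        sub_add_eq_add_sub]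
    rw [hstep, map_add, map_smul, height_α, smul_eq_mul, mul_one, List.length_cons,
      Nat.cast_succ]
    exact add_le_add ih (hv γ hγ)

/-! ### Orbits of dominant and minuscule weights -/

theorem sub_mul_s_apply (w : V ≃ₗ[ℝ] V) (i : Fin D.l) (v : V) :
    v - (w * D.s i) v = (v - w v) + D.pairing v (D.α i) • w (D.α i) := by
  rw [LinearEquiv.mul_apply, s_eq_sub_pairing_smul, map_sub, map_smul, sub_sub_eq_add_sub,
    sub_add_eq_add_sub]

theorem IsDominant.map_vle {ω : V} (hω : D.IsDominant ω) {w : V ≃ₗ[ℝ] V} (hw : w ∈ D.W) :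
    D.vle (w ω) ω := by
  induction hw using W_induction_mul_s with
  | one => simpa [vle] using isNonnegComb_zero
  | mul_s w i _ hpos ih =>
    rw [vle, sub_mul_s_apply]
    exact ih.add (hpos.1.smul (hω i))

theorem sub_map_mem_rootLattice {v : V} (hv : ∀ i, ∃ z : ℤ, D.pairing v (D.α i) = z)
    {w : V ≃ₗ[ℝ] V} (hw : w ∈ D.W) : v - w v ∈ D.rootLattice := by
  induction hw using W_induction_mul_s with
  | one => simp
  | mul_s w i hw _ ih =>
    obtain ⟨z, hz⟩ := hv i
    rw [sub_mul_s_apply, hz, Int.cast_smul_eq_zsmul]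
    exact add_mem ih
      (zsmul_mem (mem_rootLattice_of_mem_Φ (map_mem_Φ_of_mem_W hw (D.α_mem i))) z)

theorem inner_α_eq_pairing_mul (v : V) (i : Fin D.l) :
    ⟪v, D.α i⟫ = D.pairing v (D.α i) * (⟪D.α i, D.α i⟫ / 2) := by
  have := (real_inner_self_pos.2 (D.isPos_α i).2).ne'
  rw [pairing]
  field_simp

theorem IsDominant.inner_α_nonneg {ω : V} (hω : D.IsDominant ω) (i : Fin D.l) :
    0 ≤ ⟪ω, D.α i⟫ := by
  rw [inner_α_eq_pairing_mul]
  exact mul_nonneg (hω i) (half_pos (real_inner_self_pos.2 (isPos_α i).2)).le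

theorem IsDominant.inner_nonneg {ω v : V} (hω : D.IsDominant ω) (hv : D.IsNonnegComb v) :
    0 ≤ ⟪ω, v⟫ := by
  rw [D.inner_eq_sum_repr_mul]
  exact Finset.sum_nonneg fun i _ =>
    mul_nonneg (isNonnegComb_iff_repr_nonneg.1 hv i) (hω.inner_α_nonneg i)

theorem one_mem_WI (ω : V) : 1 ∈ D.WI ω :=
  ⟨one_mem _, fun i _ => isPos_α i⟩

theorem s_mul_mem_WI {ω : V} {x : V ≃ₗ[ℝ] V} (hx : x ∈ D.WI ω) {i : Fin D.l}
    (h : D.pairing (x ω) (D.α i) ≠ 0) : D.s i * x ∈ D.WI ω := by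
  refine ⟨mul_mem (s_mem_W i) hx.1, fun j hj => ?_⟩
  refine (hx.2 j hj).s (map_mem_Φ_of_mem_W hx.1 (D.α_mem j)) fun hij => h ?_
  rw [← hij, pairing_map_map_of_mem_W hx.1, hj]

theorem isNonnegComb_map_of_mem_WI {ω : V} (hω : D.IsDominant ω) {x : V ≃ₗ[ℝ] V}
    (hx : x ∈ D.WI ω) {v : V} (hv : D.IsNonnegComb v) (h : ⟪ω, v⟫ = 0) :
    D.IsNonnegComb (x v) := by
  have hv_nonneg := isNonnegComb_iff_repr_nonneg.1 hv
  rw [D.inner_eq_sum_repr_mul, Finset.sum_eq_zero_iff_of_nonneg fun i _ =>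
    mul_nonneg (hv_nonneg i) (hω.inner_α_nonneg i)] at h
  rw [← D.sum_simpleBasis_repr v, map_sum]
  refine Finset.sum_induction _ D.IsNonnegComb (fun _ _ => .add) isNonnegComb_zero fun i hi => ?_
  rw [map_smul]
  rcases mul_eq_zero.1 (h i hi) with hrepr | hinner
  · simpa [hrepr] using isNonnegComb_zero
  · exact (hx.2 i (by simp [pairing, hinner])).1.smul (hv_nonneg i)

theorem eq_of_mem_WI_of_map_eq {ω : V} (hω : D.IsDominant ω) {x y : V ≃ₗ[ℝ] V}
    (hx : x ∈ D.WI ω) (hy : y ∈ D.WI ω) (h : x ω = y ω) : x = y := by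
  have hz : x⁻¹ * y ∈ D.W := mul_mem (inv_mem hx.1) hy.1
  have hzω : (x⁻¹ * y) ω = ω := by
    rw [LinearEquiv.mul_apply, ← h, ← LinearEquiv.mul_apply, inv_mul_cancel, LinearEquiv.coe_one,
      id]
  refine inv_mul_eq_one.1 (eq_one_of_forall_isPos hz fun i => ?_)
  refine (isPos_or_isPos_neg (map_mem_Φ_of_mem_W hz (D.α_mem i))).resolve_right fun hneg => ?_
  have hinner : ⟪ω, (x⁻¹ * y) (D.α i)⟫ = ⟪ω, D.α i⟫ := by
    simpa only [hzω] using inner_map_map_of_mem_W hz ω (D.α i)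
  have hαi : ⟪ω, D.α i⟫ = 0 := by
    have hle := hω.inner_nonneg hneg.1
    rw [inner_neg_right, hinner] at hle
    exact le_antisymm (neg_nonneg.1 hle) (hω.inner_α_nonneg i)
  have hyi : D.IsPos (y (D.α i)) := hy.2 i (by simp [pairing, hαi])
  have hxz : x (-(x⁻¹ * y) (D.α i)) = -y (D.α i) := by
    rw [map_neg, ← LinearEquiv.mul_apply, mul_inv_cancel_left]
  refine hyi.not_isNonnegComb_neg (hxz ▸ isNonnegComb_map_of_mem_WI hω hx hneg.1 ?_)
  rw [inner_neg_right, hinner, hαi, neg_zero]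

theorem IsMinuscule.pairing_map {ω : V} (hω : D.IsMinuscule ω) {w : V ≃ₗ[ℝ] V} (hw : w ∈ D.W)
    {β : V} (hβ : β ∈ D.Φ) :
    D.pairing (w ω) β = -1 ∨ D.pairing (w ω) β = 0 ∨ D.pairing (w ω) β = 1 := by
  obtain ⟨γ, hγ, h⟩ := exists_pairing_map_eq_of_mem_W hw ω hβ
  exact h ▸ hω.2 γ hγ

theorem IsMinuscule.map_sub_map_mem_rootLattice {ω : V} (hω : D.IsMinuscule ω)
    {x y : V ≃ₗ[ℝ] V} (hx : x ∈ D.W) (hy : y ∈ D.W) : x ω - y ω ∈ D.rootLattice := by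
  have hint (i : Fin D.l) : ∃ z : ℤ, D.pairing ω (D.α i) = z := by
    rcases hω.2 _ (D.α_mem i) with h | h | h
    exacts [⟨-1, by simp [h]⟩, ⟨0, by simp [h]⟩, ⟨1, by simp [h]⟩]
  rw [← sub_sub_sub_cancel_left (y ω) (x ω) ω]
  exact sub_mem (sub_map_mem_rootLattice hint hy) (sub_map_mem_rootLattice hint hx)

theorem IsMinuscule.exists_isNonnegComb_sub_α {ω : V} (hω : D.IsMinuscule ω)
    {x y : V ≃ₗ[ℝ] V} (hx : x ∈ D.W) (hy : y ∈ D.W) (h : D.vle (y ω) (x ω))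
    (hne : x ω ≠ y ω) :
    ∃ i, D.IsNonnegComb (x ω - y ω - D.α i) ∧
      (D.pairing (x ω) (D.α i) = 1 ∨ D.pairing (y ω) (D.α i) = -1) := by
  obtain ⟨i, hrepr, hinner⟩ := h.exists_repr_pos_and_inner_pos (sub_ne_zero.2 hne)
  have hone : 1 ≤ D.simpleBasis.repr (x ω - y ω) i := by
    obtain ⟨z, hz⟩ := mem_rootLattice_iff.1 (hω.map_sub_map_mem_rootLattice hx hy) i
    rw [← hz] at hrepr ⊢
    exact_mod_cast hrepr
  have hlt : D.pairing (y ω) (D.α i) < D.pairing (x ω) (D.α i) := by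
    rw [inner_sub_left, sub_pos, inner_α_eq_pairing_mul (x ω), inner_α_eq_pairing_mul (y ω)]
      at hinner
    exact lt_of_mul_lt_mul_right hinner (half_pos (real_inner_self_pos.2 (isPos_α i).2)).le
  refine ⟨i, isNonnegComb_iff_repr_nonneg.2 fun j => ?_, ?_⟩
  · rcases eq_or_ne j i with rfl | hj
    · simpa using hone
    · simpa [Finsupp.single_eq_of_ne hj] using isNonnegComb_iff_repr_nonneg.1 h j
  · have hxi := hω.pairing_map hx (D.α_mem i)
    have hyi := hω.pairing_map hy (D.α_mem i)
    grind

theorem IsMinuscule.len_mul_inv_le {ω : V} (hω : D.IsMinuscule ω) {x y : V ≃ₗ[ℝ] V}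
    (hx : x ∈ D.WI ω) (hy : y ∈ D.WI ω) (h : D.vle (y ω) (x ω)) {N : ℕ}
    (hN : D.height (x ω - y ω) = N) : D.len (y * x⁻¹) ≤ N := by
  induction N generalizing x y with
  | zero =>
    have hxy : x = y := eq_of_mem_WI_of_map_eq hω.1 hx hy
      (sub_eq_zero.1 (h.eq_zero_of_height_eq_zero (by simpa using hN)))
    rw [hxy, mul_inv_cancel, len_one]
  | succ N ih =>
    have hne : x ω ≠ y ω := fun hxy => by
      rw [hxy, sub_self, map_zero] at hN
      exact N.succ_ne_zero (Nat.cast_eq_zero.1 hN.symm)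
    obtain ⟨i, hnonneg, hi⟩ := hω.exists_isNonnegComb_sub_α hx.1 hy.1 h hne
    have hN' : D.height (x ω - y ω - D.α i) = N := by simp [hN]
    rcases hi with hi | hi
    · have hsx : (D.s i * x) ω - y ω = x ω - y ω - D.α i := by
        rw [LinearEquiv.mul_apply, s_eq_sub_pairing_smul, hi, one_smul, sub_right_comm]
      have hsx_mem := s_mul_mem_WI hx (i := i) (by simp [hi])
      have hlen := ih hsx_mem hy (by rwa [vle, hsx]) (by rwa [hsx])
      calc D.len (y * x⁻¹) = D.len (y * (D.s i * x)⁻¹ * D.s i) := by simp [mul_assoc]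
        _ ≤ D.len (y * (D.s i * x)⁻¹) + 1 := len_mul_s_le (mul_mem hy.1 (inv_mem hsx_mem.1)) i
        _ ≤ N + 1 := by gcongr
    · have hsy : x ω - (D.s i * y) ω = x ω - y ω - D.α i := by
        rw [LinearEquiv.mul_apply, s_eq_sub_pairing_smul, hi, neg_one_smul, sub_neg_eq_add, sub_sub]
      have hsy_mem := s_mul_mem_WI hy (i := i) (by simp [hi])
      have hlen := ih hx hsy_mem (by rwa [vle, hsy]) (by rwa [hsy])
      calc D.len (y * x⁻¹) = D.len (D.s i * (D.s i * y * x⁻¹)) := by simp [← mul_assoc]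
        _ ≤ D.len (D.s i * y * x⁻¹) + 1 := len_s_mul_le (mul_mem hsy_mem.1 (inv_mem hx.1)) i
        _ ≤ N + 1 := by gcongr

theorem IsMinuscule.len_mul_inv_eq_height {ω : V} (hω : D.IsMinuscule ω) {x y : V ≃ₗ[ℝ] V}
    (hx : x ∈ D.WI ω) (hy : y ∈ D.WI ω) (h : D.vle (y ω) (x ω)) :
    (D.len (y * x⁻¹) : ℝ) = D.height (x ω - y ω) := by
  apply le_antisymm
  · obtain ⟨N, hN⟩ : ∃ N : ℕ, D.height (x ω - y ω) = N :=
      h.exists_height_eq_natCast (hω.map_sub_map_mem_rootLattice hx.1 hy.1)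
    rw [hN]
    exact_mod_cast hω.len_mul_inv_le hx hy h hN
  · have hle (β : V) (hβ : β ∈ D.Φ) : D.pairing (x ω) β ≤ 1 := by
      rcases hω.pairing_map hx.1 hβ with h | h | h <;> norm_num [h]
    have hyx : (y * x⁻¹) (x ω) = y ω := by
      rw [← LinearEquiv.mul_apply, inv_mul_cancel_right]
    simpa only [hyx] using height_sub_map_le_len hle (mul_mem hy.1 (inv_mem hx.1))

theorem IsMinuscule.wle_of_vle {ω : V} (hω : D.IsMinuscule ω) {x y : V ≃ₗ[ℝ] V}
    (hx : x ∈ D.WI ω) (hy : y ∈ D.WI ω) (h : D.vle (y ω) (x ω)) : D.wle x y := by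
  have len_eq {w : V ≃ₗ[ℝ] V} (hw : w ∈ D.WI ω) : (D.len w : ℝ) = D.height (ω - w ω) := by
    simpa using hω.len_mul_inv_eq_height (one_mem_WI ω) hw (hω.1.map_vle hw.1)
  have hcast : (D.len y : ℝ) = D.len x + D.len (y * x⁻¹) := by
    rw [len_eq hx, len_eq hy, hω.len_mul_inv_eq_height hx hy h, ← map_add, sub_add_sub_cancel]
  exact_mod_cast hcast

end RootSystemWithBase

open RootSystemWithBase in
theorem stmt9_general {V : Type*} [NormedAddCommGroup V] [InnerProductSpace ℝ V]
    {D : RootSystemWithBase V} {ω : V} (hω : D.IsMinuscule ω) {σ τ : V ≃ₗ[ℝ] V}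
    (hσ : σ ∈ D.WI ω) (hτ : τ ∈ D.WI ω) (hσω : D.IsNonnegComb (σ ω))
    (hτω : ∀ i, D.simpleBasis.repr (τ ω) i < 1) : D.wle σ τ := by
  refine hω.wle_of_vle hσ hτ (isNonnegComb_iff_repr_nonneg.2 fun i => ?_)
  obtain ⟨z, hz⟩ := mem_rootLattice_iff.1 (hω.map_sub_map_mem_rootLattice hσ.1 hτ.1) i
  have hgt : (-1 : ℝ) < z := by
    rw [hz, map_sub, Finsupp.sub_apply]
    linarith [hτω i, isNonnegComb_iff_repr_nonneg.1 hσω i]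
  rw [← hz]
  exact_mod_cast Int.add_one_le_of_lt (show -1 < z by exact_mod_cast hgt)

/-- Let `ω = ∑ m i • α i` be a minuscule weight with nonnegative
rational coefficients and `τ` the unique element of `W^I` with
`τ(ω) = ∑ (m i − ⌊m i⌋) • α i`.  If `σ ∈ W^I` satisfies `σ(nω) ≥ 0` for some positive
integer `n`, then `σ ≤ τ`, that is, `ℓ(τ) = ℓ(σ) + ℓ(τ σ⁻¹)`. -/
theorem stmt9 {V : Type*} [NormedAddCommGroup V] [InnerProductSpace ℝ V]
    (D : RootSystemWithBase V) (m : Fin D.l → ℚ) (hm : ∀ i, 0 ≤ m i)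
    (ω : V) (hω : ω = ∑ i, (m i : ℝ) • D.α i) (hmin : D.IsMinuscule ω)
    (τ : V ≃ₗ[ℝ] V) (hτI : τ ∈ D.WI ω)
    (hτω : τ ω = ∑ i, ((m i : ℝ) - ((⌊m i⌋ : ℤ) : ℝ)) • D.α i)
    (σ : V ≃ₗ[ℝ] V) (hσ : σ ∈ D.WI ω)
    (n : ℕ) (hn : 0 < n) (hpos : D.vle 0 (σ ((n : ℝ) • ω))) :
    D.len τ = D.len σ + D.len (τ * σ⁻¹) := by
  have hσω := (RootSystemWithBase.vle_zero_map_smul_iff σ ω (Nat.cast_pos.2 hn)).1 hpos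
  refine stmt9_general hmin hσ hτI hσω fun i => ?_
  rw [hτω, D.simpleBasis_repr_sum]
  exact_mod_cast Int.fract_lt_one (m i)
end

section
/- Let 2 ≤ r ≤ n−2 and let w = (s_{a_1}·s_{a_1−1}⋯s_1)·(s_{a_2}·s_{a_2−1}⋯s_2)⋯(s_{a_r}·s_{a_r−1}⋯s_r) ∈ W^{I_r}, where 1 ≤ a_1 < a_2 < ⋯ < a_r ≤ n−1 and ℓ(w) = Σ_{i=1}^r (a_i − i + 1). Then the inversion set R^+(w^{−1}) = {β : β a positive root with w^{−1}(β) < 0} is exactly {α_j + α_{j+1} + ⋯ + α_{a_i} = e_j − e_{a_i+1} : 1 ≤ i ≤ r, 1 ≤ j ≤ a_i, and j ≠ a_k + 1 for every k < i}. -/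
/-!  Setting: `W = S_N`, the symmetric group of `{1, …, N}`, acting on `ℝ^N` by
permuting coordinates (`w · e_i = e_{w(i)}`).  Vectors, roots and indices are written
1-based: `stdE N j` is the standard basis vector `e_j` (for `1 ≤ j ≤ N`),
`sroot N i = α_i = e_i − e_{i+1}` is the `i`-th simple root (for `1 ≤ i ≤ N−1`), and
`sTrans N i = s_i` is the adjacent transposition `(i, i+1)`. -/

namespace SnPaper

/-- The standard basis vector `e_j` of `ℝ^N` (1-based; junk value `0` out of range). -/
noncomputable def stdE (N j : ℕ) : Fin N → ℝ :=
  if h : 1 ≤ j ∧ j ≤ N then Pi.single (⟨j - 1, by omega⟩ : Fin N) 1 else 0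

/-- The simple root `α_i = e_i − e_{i+1}`. -/
noncomputable def sroot (N i : ℕ) : Fin N → ℝ := stdE N i - stdE N (i + 1)

/-- The adjacent transposition `s_i = (i, i+1)` (1-based; junk value `1` out of range). -/
def sTrans (N i : ℕ) : Equiv.Perm (Fin N) :=
  if h : 1 ≤ i ∧ i + 1 ≤ N then
    Equiv.swap (⟨i - 1, by omega⟩ : Fin N) (⟨i, by omega⟩ : Fin N)
  else 1

/-- The action of `w ∈ S_N` on `ℝ^N` permuting coordinates: `w · e_i = e_{w(i)}`. -/
def permAct (N : ℕ) (w : Equiv.Perm (Fin N)) (v : Fin N → ℝ) : Fin N → ℝ := v ∘ w.symm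

/-- `v` is a combination of the simple roots `α_1, …, α_{N−1}` with all
coefficients `≥ 0`. -/
def IsNonnegComb (N : ℕ) (v : Fin N → ℝ) : Prop :=
  ∃ c : ℕ → ℝ, (∀ i, 0 ≤ c i) ∧ v = ∑ i ∈ Finset.Icc 1 (N - 1), c i • sroot N i

/-- `v > 0`: a nonzero nonnegative combination of the simple roots. -/
def IsPos (N : ℕ) (v : Fin N → ℝ) : Prop := IsNonnegComb N v ∧ v ≠ 0

/-- `x ≤ y` for vectors: `y − x` is a nonnegative combination of the simple roots. -/
def vle (N : ℕ) (x y : Fin N → ℝ) : Prop := IsNonnegComb N (y - x)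

/-- The Coxeter length `ℓ(w)`: the least `k` such that `w` is a product of `k` adjacent
transpositions `s_i`, `1 ≤ i ≤ N−1`. -/
noncomputable def len (N : ℕ) (w : Equiv.Perm (Fin N)) : ℕ :=
  sInf {k | ∃ L : List ℕ, (∀ i ∈ L, 1 ≤ i ∧ i ≤ N - 1) ∧ L.length = k ∧
    (L.map (sTrans N)).prod = w}

/-- `w ≤ τ` in `W`:  `ℓ(τ) = ℓ(w) + ℓ(τ w⁻¹)`. -/
def wle (N : ℕ) (w τ : Equiv.Perm (Fin N)) : Prop :=
  len N τ = len N w + len N (τ * w⁻¹)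

/-- `W^{I_r} = {w ∈ W : w(α_j) > 0 for all j ≠ r}`. -/
def WIr (N r : ℕ) : Set (Equiv.Perm (Fin N)) :=
  {w | ∀ j, 1 ≤ j → j ≤ N - 1 → j ≠ r → IsPos N (permAct N w (sroot N j))}

/-- The block `s_a · s_{a−1} ⋯ s_j` of consecutive simple reflections. -/
def block (N j a : ℕ) : Equiv.Perm (Fin N) :=
  ((List.range' j (a + 1 - j)).reverse.map (sTrans N)).prod

/-- The canonical form `(s_{a_i} ⋯ s_i) · (s_{a_{i+1}} ⋯ s_{i+1}) ⋯ (s_{a_r} ⋯ s_r)`. -/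
def canonForm (N i r : ℕ) (a : ℕ → ℕ) : Equiv.Perm (Fin N) :=
  ((List.range' i (r + 1 - i)).map fun j => block N j (a j)).prod

/-- The fundamental weight `ω_r = e_1 + ⋯ + e_r − (r/N)(e_1 + ⋯ + e_N)`. -/
noncomputable def fundWeight (N r : ℕ) : Fin N → ℝ :=
  (∑ i ∈ Finset.Icc 1 r, stdE N i) - ((r : ℝ) / (N : ℝ)) • ∑ i ∈ Finset.Icc 1 N, stdE N i

end SnPaper

namespace SnPaper

/-!
The Coxeter notions reduce to one-line notation: `e_i - e_j` is positive iff `i < j`, so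
`R⁺(w⁻¹)` consists of the `e_{w(x)} - e_{w(y)}` with `y < x` and `w(x) < w(y)`. The canonical form
sends `y ≤ r` to `a_y + 1` and is increasing beyond `r`. Hence in such an inversion `y ≤ r`, and
`y < x` just says that the value `w(x)` is not attained before `y`, i.e. is no `a_k + 1` with
`k < y`.
-/

/-- The inversion set `R⁺(w)` of the positive roots `e_p - e_q`, `p < q`, which `w` makes
negative. -/
def inversionSet (n : ℕ) (w : Equiv.Perm (Fin n)) : Set (Fin n → ℝ) :=
  {β | (∃ p q, 1 ≤ p ∧ p < q ∧ q ≤ n ∧ β = stdE n p - stdE n q) ∧ IsPos n (-(permAct n w β))}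

/-- The height of a vector: the linear functional equal to `1` on every simple root, which
makes it nonnegative on nonnegative combinations of them. It is normalized to vanish on `e_1`. -/
noncomputable def height (n : ℕ) : (Fin n → ℝ) →ₗ[ℝ] ℝ :=
  Fintype.linearCombination ℝ fun x : Fin n => -(x : ℝ)

lemma stdE_val_add_one {n : ℕ} (x : Fin n) : stdE n (x + 1) = Pi.single x 1 :=
  dif_pos ⟨Nat.le_add_left 1 x, x.isLt⟩

lemma permAct_stdE_sub_stdE {n : ℕ} (w : Equiv.Perm (Fin n)) (x y : Fin n) :
    permAct n w (stdE n (x + 1) - stdE n (y + 1)) = stdE n (w x + 1) - stdE n (w y + 1) := by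
  funext z
  simp only [stdE_val_add_one, permAct, Function.comp_apply, Pi.sub_apply, Pi.single_apply,
    Equiv.symm_apply_eq]

lemma height_stdE {n : ℕ} (x : Fin n) : height n (stdE n (x + 1)) = -x := by
  rw [stdE_val_add_one, height, Fintype.linearCombination_apply_single, one_smul]

lemma height_sroot {n i : ℕ} (hi : i ∈ Finset.Icc 1 (n - 1)) : height n (sroot n i) = 1 := by
  rw [Finset.mem_Icc] at hi
  obtain ⟨k, rfl⟩ : ∃ k, i = k + 1 := ⟨i - 1, by omega⟩
  have hk : height n (stdE n (k + 1)) = -(k : ℝ) := height_stdE ⟨k, by omega⟩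
  have hk' : height n (stdE n (k + 1 + 1)) = -((k + 1 : ℕ) : ℝ) := height_stdE ⟨k + 1, by omega⟩
  rw [sroot, map_sub, hk, hk']
  push_cast
  ring

lemma IsNonnegComb.height_nonneg {n : ℕ} {v : Fin n → ℝ} (hv : IsNonnegComb n v) :
    0 ≤ height n v := by
  obtain ⟨c, hc, rfl⟩ := hv
  rw [map_sum]
  refine Finset.sum_nonneg fun i hi => ?_
  rw [map_smul, height_sroot hi, smul_eq_mul, mul_one]
  exact hc i

lemma sum_sroot_Ico (n : ℕ) {i j : ℕ} (hij : i ≤ j) :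
    ∑ k ∈ Finset.Ico i j, sroot n k = stdE n i - stdE n j := by
  rw [← neg_sub (stdE n j), ← Finset.sum_Ico_sub _ hij, ← Finset.sum_neg_distrib]
  simp only [sroot, neg_sub]

lemma isNonnegComb_stdE_sub_stdE {n i j : ℕ} (hi : 1 ≤ i) (hij : i ≤ j) (hj : j ≤ n) :
    IsNonnegComb n (stdE n i - stdE n j) := by
  have hsub : Finset.Ico i j ⊆ Finset.Icc 1 (n - 1) := fun k hk => by
    rw [Finset.mem_Ico] at hk
    rw [Finset.mem_Icc]
    omega
  refine ⟨Set.indicator (Finset.Ico i j) 1, Set.indicator_nonneg fun _ _ => zero_le_one, ?_⟩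
  rw [← sum_sroot_Ico n hij, ← Finset.sum_subset hsub]
  · refine Finset.sum_congr rfl fun k hk => ?_
    rw [Set.indicator_of_mem (Finset.mem_coe.2 hk), Pi.one_apply, one_smul]
  · intro k _ hk
    rw [Set.indicator_of_notMem (mt Finset.mem_coe.1 hk), zero_smul]

lemma isPos_stdE_sub_stdE_iff {n : ℕ} {x y : Fin n} :
    IsPos n (stdE n (x + 1) - stdE n (y + 1)) ↔ x < y := by
  have hheight : height n (stdE n (x + 1) - stdE n (y + 1)) = (y : ℝ) - x := by
    rw [map_sub, height_stdE, height_stdE]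
    ring
  constructor
  · rintro ⟨hcomb, hne⟩
    have hle : (x : ℝ) ≤ y := sub_nonneg.1 (hheight ▸ hcomb.height_nonneg)
    refine lt_of_le_of_ne (by exact_mod_cast hle) ?_
    rintro rfl
    exact hne (sub_self _)
  · intro hxy
    have hcomb := isNonnegComb_stdE_sub_stdE (Nat.le_add_left 1 x) (Nat.succ_le_succ hxy.le) y.isLt
    refine ⟨hcomb, fun h => ?_⟩
    rw [h, map_zero, eq_comm, sub_eq_zero] at hheight
    exact hxy.ne' (Fin.ext (by exact_mod_cast hheight))

lemma mem_inversionSet_inv {n : ℕ} {w : Equiv.Perm (Fin n)} {β : Fin n → ℝ} :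
    β ∈ inversionSet n w⁻¹ ↔
      ∃ x y, (y < x ∧ w x < w y) ∧ β = stdE n (w x + 1) - stdE n (w y + 1) := by
  have isPos_neg_permAct_iff (x y : Fin n) :
      IsPos n (-(permAct n w⁻¹ (stdE n (w x + 1) - stdE n (w y + 1)))) ↔ y < x := by
    rw [permAct_stdE_sub_stdE, neg_sub, isPos_stdE_sub_stdE_iff, Equiv.Perm.inv_def,
      w.symm_apply_apply, w.symm_apply_apply]
  constructor
  · rintro ⟨⟨p, q, hp, hpq, hq, rfl⟩, hneg⟩
    obtain ⟨x, hx⟩ := w.surjective ⟨p - 1, by omega⟩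
    obtain ⟨y, hy⟩ := w.surjective ⟨q - 1, by omega⟩
    obtain rfl : (w x : ℕ) + 1 = p := by rw [hx]; exact Nat.sub_add_cancel hp
    obtain rfl : (w y : ℕ) + 1 = q := by rw [hy]; exact Nat.sub_add_cancel (by omega)
    exact ⟨x, y, ⟨(isPos_neg_permAct_iff x y).1 hneg, Nat.lt_of_succ_lt_succ hpq⟩, rfl⟩
  · rintro ⟨x, y, ⟨hyx, hw⟩, rfl⟩
    exact ⟨⟨_, _, Nat.le_add_left 1 _, Nat.succ_lt_succ hw, (w y).isLt, rfl⟩,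
      (isPos_neg_permAct_iff x y).2 hyx⟩

lemma inversion_iff_of_strictMonoOn_compl {α β : Type*} [LinearOrder α] [Preorder β]
    {f : α → β} (hf : f.Injective) {s : Set α} (hs : IsLowerSet s) (hmono : StrictMonoOn f sᶜ)
    {x y : α} :
    y < x ∧ f x < f y ↔ y ∈ s ∧ f x < f y ∧ ∀ z < y, f z ≠ f x := by
  constructor
  · rintro ⟨hyx, hlt⟩
    refine ⟨?_, hlt, fun z hz h => (hz.trans hyx).ne (hf h)⟩
    by_contra hy
    exact lt_asymm hlt (hmono hy (fun hx => hy (hs hyx.le hx)) hyx)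
  · rintro ⟨-, hlt, hne⟩
    refine ⟨lt_of_not_ge fun hxy => ?_, hlt⟩
    rcases hxy.eq_or_lt with rfl | hxy
    · exact lt_irrefl _ hlt
    · exact hne x hxy rfl

lemma mem_inversionSet_inv_of_strictMonoOn {n r : ℕ} {w : Equiv.Perm (Fin n)}
    (hw : StrictMonoOn w {x | r ≤ (x : ℕ)}) {β : Fin n → ℝ} :
    β ∈ inversionSet n w⁻¹ ↔ ∃ y p : Fin n, (y : ℕ) < r ∧ p < w y ∧ (∀ z < y, w z ≠ p) ∧
      β = stdE n (p + 1) - stdE n (w y + 1) := by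
  have hlower : IsLowerSet {x : Fin n | (x : ℕ) < r} := fun _ _ hyx hx =>
    Nat.lt_of_le_of_lt (Fin.le_def.1 hyx) hx
  have hmono : StrictMonoOn w {x | (x : ℕ) < r}ᶜ := by
    simpa only [Set.compl_ofPred, not_lt] using hw
  simp only [mem_inversionSet_inv,
    inversion_iff_of_strictMonoOn_compl w.injective hlower hmono, Set.mem_ofPred_eq, and_assoc]
  rw [w.exists_congr_left, exists_comm]
  simp only [Equiv.apply_symm_apply]

lemma sTrans_succ_apply {n i : ℕ} (hi : i + 1 < n) (x : Fin n) :
    (sTrans n (i + 1) x : ℕ) = if (x : ℕ) = i then i + 1 else if (x : ℕ) = i + 1 then i else x := by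
  rw [sTrans, dif_pos ⟨Nat.le_add_left 1 i, hi⟩, Equiv.swap_apply_def]
  simp only [Fin.ext_iff, Nat.add_sub_cancel]
  split_ifs <;> rfl

lemma block_succ {n j a : ℕ} (hja : j ≤ a + 1) :
    block n j (a + 1) = sTrans n (a + 1) * block n j a := by
  obtain ⟨m, hm⟩ := Nat.exists_eq_add_of_le hja
  rw [block, block, hm, show j + m + 1 - j = m + 1 by omega, Nat.add_sub_cancel_left,
    List.range'_concat, List.reverse_append, one_mul]
  rfl

/- `Fin n` numbers the points from `0`, so the transpositions `s_{k+1}, …, s_a` permute the points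
`k, …, a`. -/
lemma block_apply {n k a : ℕ} (hka : k ≤ a) (han : a < n) (x : Fin n) :
    (block n (k + 1) a x : ℕ) =
      if (x : ℕ) = k then a else if k < (x : ℕ) ∧ (x : ℕ) ≤ a then (x : ℕ) - 1 else x := by
  induction a, hka using Nat.le_induction with
  | base =>
    have hblock : block n (k + 1) k = 1 := by simp [block]
    rw [hblock, Equiv.Perm.one_apply]
    split_ifs <;> omega
  | succ a hka ih =>
    rw [block_succ (by omega), Equiv.Perm.mul_apply, sTrans_succ_apply han, ih (by omega)]
    split_ifs <;> omega

lemma block_apply_eq_self {n k a : ℕ} (hka : k ≤ a) (han : a < n) {x : Fin n}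
    (hx : (x : ℕ) < k ∨ a < x) : block n (k + 1) a x = x := by
  apply Fin.ext
  rw [block_apply hka han]
  split_ifs <;> omega

lemma strictMonoOn_block {n k a : ℕ} (hka : k ≤ a) (han : a < n) :
    StrictMonoOn (block n (k + 1) a) {x | k + 1 ≤ (x : ℕ)} := by
  intro x hx y hy hxy
  rw [Set.mem_ofPred_eq] at hx hy
  rw [Fin.lt_def] at hxy ⊢
  rw [block_apply hka han, block_apply hka han]
  split_ifs <;> omega

lemma mapsTo_block {n k a : ℕ} (hka : k ≤ a) (han : a < n) :
    Set.MapsTo (block n (k + 1) a) {x | k + 1 ≤ (x : ℕ)} {x | k ≤ (x : ℕ)} := by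
  intro x hx
  rw [Set.mem_ofPred_eq] at hx ⊢
  rw [block_apply hka han]
  split_ifs <;> omega

lemma canonForm_succ (n m : ℕ) (a : ℕ → ℕ) :
    canonForm n 1 (m + 1) a = canonForm n 1 m a * block n (m + 1) (a (m + 1)) := by
  simp only [canonForm, Nat.add_sub_cancel, List.range'_concat, List.map_append, List.map_singleton,
    List.prod_append, List.prod_singleton, one_mul, Nat.add_comm 1 m]

section CanonForm

variable {n m : ℕ} {a : ℕ → ℕ}

lemma canonForm_apply_of_forall_lt (ha : ∀ k < m, a (k + 1) ∈ Set.Ico k n) {x : Fin n}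
    (hx : ∀ k < m, a (k + 1) < x) : canonForm n 1 m a x = x := by
  induction m with
  | zero => rfl
  | succ m ih =>
    obtain ⟨hma, han⟩ := ha m m.lt_succ_self
    rw [canonForm_succ, Equiv.Perm.mul_apply,
      block_apply_eq_self hma han (Or.inr (hx m m.lt_succ_self))]
    exact ih (fun k hk => ha k (hk.trans m.lt_succ_self)) fun k hk => hx k (hk.trans m.lt_succ_self)

lemma canonForm_apply_of_lt (hmono : StrictMonoOn a (Set.Icc 1 m))
    (ha : ∀ k < m, a (k + 1) ∈ Set.Ico k n) {x : Fin n} (hx : (x : ℕ) < m) :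
    (canonForm n 1 m a x : ℕ) = a (x + 1) := by
  induction m with
  | zero => exact absurd hx (Nat.not_lt_zero _)
  | succ m ih =>
    obtain ⟨hma, han⟩ := ha m m.lt_succ_self
    have ha' : ∀ k < m, a (k + 1) ∈ Set.Ico k n := fun k hk => ha k (hk.trans m.lt_succ_self)
    rw [canonForm_succ, Equiv.Perm.mul_apply]
    rcases Nat.lt_succ_iff_lt_or_eq.1 hx with hxm | hxm
    · rw [block_apply_eq_self hma han (Or.inl hxm)]
      exact ih (hmono.mono (Set.Icc_subset_Icc_right m.le_succ)) ha' hxm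
    · have hval : (block n (m + 1) (a (m + 1)) x : ℕ) = a (m + 1) := by
        rw [block_apply hma han, if_pos hxm]
      rw [canonForm_apply_of_forall_lt ha', hval, hxm]
      intro k hk
      rw [hval]
      exact hmono ⟨by omega, by omega⟩ ⟨by omega, le_rfl⟩ (by omega)

lemma strictMonoOn_canonForm (ha : ∀ k < m, a (k + 1) ∈ Set.Ico k n) :
    StrictMonoOn (canonForm n 1 m a) {x | m ≤ (x : ℕ)} := by
  induction m with
  | zero => exact fun x _ y _ hxy => hxy
  | succ m ih =>
    obtain ⟨hma, han⟩ := ha m m.lt_succ_self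
    rw [canonForm_succ, Equiv.Perm.coe_mul]
    exact (ih fun k hk => ha k (hk.trans m.lt_succ_self)).comp
      (strictMonoOn_block hma han) (mapsTo_block hma han)

end CanonForm

lemma mem_Ico_of_strictMonoOn_Icc {n r : ℕ} {a : ℕ → ℕ} (hmono : StrictMonoOn a (Set.Icc 1 r))
    (har : a r < n) {k : ℕ} (hk : k < r) : a (k + 1) ∈ Set.Ico k n := by
  have hle : k ≤ a (k + 1) := by
    induction k with
    | zero => exact Nat.zero_le _
    | succ k ih =>
      have hstep := hmono ⟨by omega, by omega⟩ ⟨by omega, hk⟩ (k + 1).lt_succ_self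
      exact Nat.succ_le_of_lt ((ih (by omega)).trans_lt hstep)
  have hlast : a (k + 1) ≤ a r := hmono.monotoneOn ⟨by omega, hk⟩ ⟨by omega, le_rfl⟩ hk
  exact ⟨hle, hlast.trans_lt har⟩

theorem stmt14_general (n r : ℕ) (a : ℕ → ℕ) (hmono : StrictMonoOn a (Set.Icc 1 r))
    (har : a r < n) :
    inversionSet n (canonForm n 1 r a)⁻¹ =
      {β : Fin n → ℝ | ∃ i j, 1 ≤ i ∧ i ≤ r ∧ 1 ≤ j ∧ j ≤ a i ∧
        (∀ k, 1 ≤ k → k < i → j ≠ a k + 1) ∧ β = stdE n j - stdE n (a i + 1)} := by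
  have ha {k : ℕ} (hk : k < r) := mem_Ico_of_strictMonoOn_Icc hmono har hk
  have hval {y : Fin n} (hy : (y : ℕ) < r) := canonForm_apply_of_lt hmono (fun _ => ha) hy
  ext β
  rw [mem_inversionSet_inv_of_strictMonoOn (strictMonoOn_canonForm fun _ => ha),
    Set.mem_ofPred_eq]
  constructor
  · rintro ⟨y, p, hyr, hpy, hne, rfl⟩
    rw [Fin.lt_def, hval hyr] at hpy
    refine ⟨y + 1, p + 1, by omega, hyr, by omega, hpy, fun k hk hky hpk => ?_, by rw [hval hyr]⟩
    obtain ⟨z, rfl⟩ := Nat.exists_eq_add_of_le' hk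
    have hzy : z < (y : ℕ) := Nat.lt_of_succ_lt_succ hky
    refine hne ⟨z, hzy.trans y.isLt⟩ hzy (Fin.ext ?_)
    rw [hval (hzy.trans hyr), Nat.succ.inj hpk]
  · rintro ⟨i, j, hi, hir, hj, hja, hne, rfl⟩
    obtain ⟨y, rfl⟩ := Nat.exists_eq_add_of_le' hi
    obtain ⟨p, rfl⟩ := Nat.exists_eq_add_of_le' hj
    obtain ⟨hya, han⟩ := ha hir
    have hvaly := hval (y := ⟨y, hya.trans_lt han⟩) hir
    refine ⟨⟨y, hya.trans_lt han⟩, ⟨p, by omega⟩, hir, ?_, fun z hzy hzp => ?_, by rw [hvaly]⟩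
    · rwa [Fin.lt_def, hvaly]
    · refine hne (z + 1) (by omega) (Nat.succ_lt_succ hzy) ?_
      rw [← hval ((Fin.lt_def.1 hzy).trans hir), hzp]

/-- Let `2 ≤ r ≤ n−2` and
`w = (s_{a_1} ⋯ s_1) · (s_{a_2} ⋯ s_2) ⋯ (s_{a_r} ⋯ s_r) ∈ W^{I_r}` with
`1 ≤ a_1 < ⋯ < a_r ≤ n−1` and `ℓ(w) = ∑ (a_i − i + 1)`.  Then the inversion set
`R⁺(w⁻¹) = {β > 0 : w⁻¹(β) < 0}` is exactly
`{α_j + ⋯ + α_{a_i} = e_j − e_{a_i+1} : 1 ≤ i ≤ r, 1 ≤ j ≤ a_i, j ≠ a_k + 1 ∀ k < i}`. -/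
theorem stmt14 (n r : ℕ) (hn : 4 ≤ n) (hr2 : 2 ≤ r) (hrn : r ≤ n - 2)
    (a : ℕ → ℕ) (ha1 : 1 ≤ a 1)
    (hainc : ∀ j, 1 ≤ j → j < r → a j < a (j + 1)) (har : a r ≤ n - 1)
    (w : Equiv.Perm (Fin n)) (hwdef : w = canonForm n 1 r a) (hwI : w ∈ WIr n r)
    (hwlen : len n w = ∑ i ∈ Finset.Icc 1 r, (a i - i + 1)) :
    {β : Fin n → ℝ |
        (∃ p q, 1 ≤ p ∧ p < q ∧ q ≤ n ∧ β = stdE n p - stdE n q) ∧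
        IsPos n (-(permAct n w⁻¹ β))} =
      {β : Fin n → ℝ | ∃ i j, 1 ≤ i ∧ i ≤ r ∧ 1 ≤ j ∧ j ≤ a i ∧
        (∀ k, 1 ≤ k → k < i → j ≠ a k + 1) ∧ β = stdE n j - stdE n (a i + 1)} := by
  subst hwdef
  exact stmt14_general n r a (strictMonoOn_of_lt_add_one Set.ordConnected_Icc
    fun j _ hj hj' => hainc j hj.1 hj'.2) (by omega)

end SnPaper
end
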